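/- Let p be a prime, k ≥ 1 an integer, K a field of characteristic p, A = K[x]/(x^{kp}), and B = A ⊗_K A. Then for every m ≥ 0, Ext^m_B(A,A) is a K-vector space of dimension kp; in particular Ext^m_B(A,A) ≅ A as K-vector spaces for all m. -/

import Mathlib

open Polynomial TensorProduct CategoryTheory

noncomputable section

/-- `A = K[x]/(x^N)`, the truncated polynomial ring over the field `K`. -/
abbrev A (K : Type) [Field K] (N : ℕ) : Type := AdjoinRoot ((X : K[X]) ^ N)

/-- `B = A ⊗_K A`. -/
abbrev B (K : Type) [Field K] (N : ℕ) : Type := A K N ⊗[K] A K N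

/-- `A` is a `B`-module via the multiplication map `μ(a ⊗ b) = ab`. -/
instance (K : Type) [Field K] (N : ℕ) : Algebra (B K N) (A K N) :=
  (Algebra.TensorProduct.lmul' K (S := A K N)).toRingHom.toAlgebra

/-- `A` as an object of the category of `B`-modules. -/
def M (K : Type) [Field K] (N : ℕ) : ModuleCat.{0} (B K N) := ModuleCat.of (B K N) (A K N)

/-- `Ext^m_B(A, A)` as a `K`-vector space, defined via the derived functor `Ext` of the
`K`-linear abelian category of `B`-modules. -/
def ExtAA (K : Type) [Field K] (N m : ℕ) : ModuleCat K :=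
  ((Ext K (ModuleCat.{0} (B K N)) m).obj (Opposite.op (M K N))).obj (M K N)

section Gen

variable {R : Type} [CommRing R] (u v : R)

def mulHom (r : R) : ModuleCat.of R R ⟶ ModuleCat.of R R :=
  ModuleCat.ofHom (LinearMap.mulLeft R r)

lemma mulHom_comp (r s : R) (h : r * s = 0) : mulHom r ≫ mulHom s = 0 := by
  ext
  simp [mulHom, mul_comm s r, h]

def perC (h : u * v = 0) : ChainComplex (ModuleCat.{0} R) ℕ :=
  HomologicalComplex.alternatingConst (ModuleCat.of R R) (φ := mulHom v) (ψ := mulHom u)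
    (mulHom_comp _ _ (by rw [mul_comm, h])) (mulHom_comp _ _ h)
    fun _ _ => ComplexShape.down_nat_odd_add

lemma perC_d_even (h : u * v = 0) (m : ℕ) (hm : Even (m + 1)) :
    (perC u v h).d (m + 1) m = mulHom v := by
  simp [perC, hm]; rfl

lemma perC_d_odd (h : u * v = 0) (m : ℕ) (hm : ¬ Even (m + 1)) :
    (perC u v h).d (m + 1) m = mulHom u := by
  simp [perC, hm]; rfl

variable (Mod : ModuleCat.{0} R) (f : ModuleCat.of R R ⟶ Mod)

def perπ (h : u * v = 0) (huf : mulHom u ≫ f = 0) :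
    perC u v h ⟶ (ChainComplex.single₀ (ModuleCat.{0} R)).obj Mod :=
  ((perC u v h).toSingle₀Equiv Mod).symm ⟨f, by
    rw [perC_d_odd _ _ _ _ (by simp)]; exact huf⟩

lemma perπ_quasiIso (h : u * v = 0) (huf : mulHom u ≫ f = 0)
    (hf : Function.Surjective f.hom)
    (h1 : ∀ z, f.hom z = 0 → ∃ w, z = u * w)
    (h2 : ∀ z, u * z = 0 → ∃ w, z = v * w)
    (h3 : ∀ z, v * z = 0 → ∃ w, z = u * w) :
    QuasiIso (perπ u v Mod f h huf) where
  quasiIsoAt m := by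
    induction m with
    | zero =>
      rw [ChainComplex.quasiIsoAt₀_iff, ShortComplex.quasiIso_iff_of_zeros' _ rfl rfl rfl]
      have hf0 : (perπ u v Mod f h huf).f 0 = f := by
        simp [perπ, ChainComplex.toSingle₀Equiv]; rfl
      constructor
      · rw [ShortComplex.moduleCat_exact_iff]
        intro z hz
        have hz' : f.hom z = 0 := by
          rw [← hf0]; exact hz
        obtain ⟨w, hw⟩ := h1 z hz'
        refine ⟨w, ?_⟩
        change ((perC u v h).d 1 0).hom w = z
        rw [perC_d_odd _ _ _ _ (by simp)]
        exact hw.symm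
      · rw [ModuleCat.epi_iff_surjective]
        change Function.Surjective ((perπ u v Mod f h huf).f 0).hom
        rw [hf0]; exact hf
    | succ m _ =>
      rw [quasiIsoAt_iff_exactAt' (hL := ChainComplex.exactAt_succ_single_obj ..),
          HomologicalComplex.exactAt_iff' _ (m + 2) (m + 1) m (by simp) (by simp)]
      rw [ShortComplex.moduleCat_exact_iff]
      intro z hz
      change ((perC u v h).d (m+1) m).hom z = 0 at hz
      change ∃ w, ((perC u v h).d (m+1+1) (m+1)).hom w = z
      by_cases hm : Even (m + 1)
      · rw [perC_d_even _ _ _ _ hm] at hz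
        rw [perC_d_odd _ _ _ _ (by rw [Nat.even_add_one]; simpa using hm)]
        obtain ⟨w, hw⟩ := h3 z hz
        exact ⟨w, hw.symm⟩
      · rw [perC_d_odd _ _ _ _ hm] at hz
        rw [perC_d_even _ _ _ _ (by rw [Nat.even_add_one]; simpa using hm)]
        obtain ⟨w, hw⟩ := h2 z hz
        exact ⟨w, hw.symm⟩

lemma projRR : Projective (ModuleCat.of R R) :=
  ModuleCat.projective_of_free (Module.Basis.singleton Unit R)

def perRes (h : u * v = 0) (huf : mulHom u ≫ f = 0)
    (hf : Function.Surjective f.hom)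
    (h1 : ∀ z, f.hom z = 0 → ∃ w, z = u * w)
    (h2 : ∀ z, u * z = 0 → ∃ w, z = v * w)
    (h3 : ∀ z, v * z = 0 → ∃ w, z = u * w) : ProjectiveResolution Mod where
  complex := perC u v h
  projective _ := projRR
  π := perπ u v Mod f h huf
  quasiIso := perπ_quasiIso u v Mod f h huf hf h1 h2 h3

lemma perExt {K : Type} [Field K] [Algebra K R] (h : u * v = 0) (huf : mulHom u ≫ f = 0)
    (hf : Function.Surjective f.hom)
    (h1 : ∀ z, f.hom z = 0 → ∃ w, z = u * w)
    (h2 : ∀ z, u * z = 0 → ∃ w, z = v * w)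
    (h3 : ∀ z, v * z = 0 → ∃ w, z = u * w)
    (hu : ∀ x : Mod, u • x = 0) (hv : ∀ x : Mod, v • x = 0) (m : ℕ) :
    Nonempty ((((Ext K (ModuleCat.{0} R) m).obj (Opposite.op Mod)).obj Mod) ≅
      ModuleCat.of K (ModuleCat.of R R ⟶ Mod)) := by
  let P := perRes u v Mod f h huf hf h1 h2 h3
  have key : ∀ (r : R) (_ : ∀ x : Mod, r • x = 0) (g : ModuleCat.of R R ⟶ Mod),
      mulHom r ≫ g = 0 := by
    intro r hr g
    ext
    change g.hom (r * 1) = 0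
    rw [← smul_eq_mul, map_smul, hr]
  have hd : ∀ i j, (P.complex.linearYonedaObj K Mod).d i j = 0 := by
    intro i j
    by_cases hij : i + 1 = j
    · subst hij
      ext (g : ModuleCat.of R R ⟶ Mod)
      change (perC u v h).d (i+1) i ≫ g = 0
      by_cases hm : Even (i + 1)
      · rw [perC_d_even _ _ _ _ hm]; exact key _ hv g
      · rw [perC_d_odd _ _ _ _ hm]; exact key _ hu g
    · exact HomologicalComplex.shape _ _ _ hij
  have i1 := (P.complex.linearYonedaObj K Mod).isIso_iCycles m _ rfl (hd _ _)
  have i2 := (P.complex.linearYonedaObj K Mod).isIso_homologyπ _ m rfl (hd _ _)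
  exact ⟨P.isoExt m Mod ≪≫ (asIso ((P.complex.linearYonedaObj K Mod).homologyπ m)).symm ≪≫
    (@asIso _ _ _ _ _ i1 : _)⟩

end Gen

section Conc

variable (K : Type) [Field K] (N : ℕ)

abbrev aa : B K N := AdjoinRoot.root ((X : K[X]) ^ N) ⊗ₜ[K] 1
abbrev bb : B K N := 1 ⊗ₜ[K] AdjoinRoot.root ((X : K[X]) ^ N)
abbrev uu : B K N := aa K N - bb K N
abbrev vv : B K N := ∑ i ∈ Finset.range N, aa K N ^ i * bb K N ^ (N - 1 - i)
abbrev mu : B K N →ₐ[K] A K N := Algebra.TensorProduct.lmul' K (S := A K N)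

lemma root_pow : (AdjoinRoot.root ((X : K[X]) ^ N)) ^ N = 0 := by
  have := AdjoinRoot.eval₂_root ((X : K[X]) ^ N)
  simpa using this

lemma uv : uu K N * vv K N = 0 := by
  rw [mul_comm, geom_sum₂_mul]
  simp [aa, bb, Algebra.TensorProduct.tmul_pow, root_pow]

lemma mu_uu : mu K N (uu K N) = 0 := by simp [mu, uu, aa, bb]

lemma mu_vv (h : (N : K) = 0) : mu K N (vv K N) = 0 := by
  simp only [mu, vv, aa, bb, map_sum, map_mul, map_pow, Algebra.TensorProduct.lmul'_apply_tmul,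
    mul_one, one_mul, ← pow_add]
  rw [Finset.sum_congr rfl (g := fun _ => AdjoinRoot.root ((X : K[X]) ^ N) ^ (N - 1))]
  · rw [Finset.sum_const, Finset.card_range, ← Nat.cast_smul_eq_nsmul K, h, zero_smul]
  · intro i hi
    have := Finset.mem_range.1 hi
    congr 1; omega

lemma congr_u (z : B K N) : ∃ w, z = (mu K N z) ⊗ₜ[K] 1 + uu K N * w := by
  induction z using TensorProduct.induction_on with
  | zero => exact ⟨0, by simp⟩
  | add y z hy hz =>
    obtain ⟨w, hw⟩ := hy
    obtain ⟨w', hw'⟩ := hz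
    refine ⟨w + w', ?_⟩
    rw [map_add, TensorProduct.add_tmul, mul_add]
    nth_rewrite 1 [hw, hw']
    ring
  | tmul s t =>
    obtain ⟨q, rfl⟩ := AdjoinRoot.mk_surjective t
    have e1 : (1 : A K N) ⊗ₜ[K] (AdjoinRoot.mk _ q) = aeval (bb K N) q := by
      have := Polynomial.aeval_algHom_apply
        (Algebra.TensorProduct.includeRight : A K N →ₐ[K] B K N) (AdjoinRoot.root _) q
      rw [AdjoinRoot.aeval_eq] at this
      exact this.symm
    have e2 : (AdjoinRoot.mk _ q) ⊗ₜ[K] (1 : A K N) = aeval (aa K N) q := by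
      have := Polynomial.aeval_algHom_apply
        (Algebra.TensorProduct.includeLeft : A K N →ₐ[K] B K N) (AdjoinRoot.root _) q
      rw [AdjoinRoot.aeval_eq] at this
      exact this.symm
    have hd : uu K N ∣ aeval (aa K N) q - aeval (bb K N) q := by
      rw [aeval_def, aeval_def, ← Polynomial.eval_map, ← Polynomial.eval_map]
      exact Polynomial.sub_dvd_eval_sub _ _ _
    obtain ⟨w, hw⟩ := hd
    refine ⟨- (s ⊗ₜ 1) * w, ?_⟩
    have e3 : s ⊗ₜ[K] (AdjoinRoot.mk (X ^ N) q) =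
      (s ⊗ₜ[K] (1 : A K N)) * ((1 : A K N) ⊗ₜ[K] (AdjoinRoot.mk (X ^ N) q)) := by simp
    have e4 : (s * AdjoinRoot.mk (X ^ N) q) ⊗ₜ[K] (1 : A K N) =
      (s ⊗ₜ[K] (1 : A K N)) * ((AdjoinRoot.mk (X ^ N) q) ⊗ₜ[K] (1 : A K N)) := by simp
    rw [Algebra.TensorProduct.lmul'_apply_tmul, e4, e3, e1, e2]
    linear_combination (s ⊗ₜ[K] (1 : A K N)) * (-hw)

lemma ex1 (z : B K N) (hz : mu K N z = 0) : ∃ w, z = uu K N * w := by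
  obtain ⟨w, hw⟩ := congr_u K N z
  exact ⟨w, by rw [hw, hz]; simp⟩

lemma v_inj (hN : 0 < N) (c : A K N) (h : vv K N * (c ⊗ₜ[K] 1) = 0) : c = 0 := by
  have hm : ((X : K[X]) ^ N).Monic := monic_X_pow N
  let pb := AdjoinRoot.powerBasis' hm
  have hdim : pb.dim = N := by simp [pb]
  let l : A K N →ₗ[K] K := pb.basis.coord ⟨N - 1, by omega⟩
  have hl : ∀ i < N, l (AdjoinRoot.root ((X : K[X]) ^ N) ^ i) = if i = N - 1 then 1 else 0 := by
    intro i hi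
    have : AdjoinRoot.root ((X : K[X]) ^ N) ^ i = pb.basis ⟨i, by omega⟩ := by
      simp [pb]
    rw [this]
    simp only [l, Module.Basis.coord_apply, Module.Basis.repr_self, Finsupp.single_apply,
      Fin.mk.injEq]
  let L : B K N →ₗ[K] A K N := (TensorProduct.rid K (A K N)).toLinearMap ∘ₗ LinearMap.lTensor _ l
  have := congrArg L h
  rw [map_zero, Finset.sum_mul, map_sum, Finset.sum_eq_single 0] at this
  · simpa [aa, bb, Algebra.TensorProduct.tmul_pow, L, hl (N - 1) (by omega)] using this
  · intro i hi hi0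
    have := Finset.mem_range.1 hi
    simp [aa, bb, Algebra.TensorProduct.tmul_pow, L, hl (N - 1 - i) (by omega)]
    omega
  · simp; omega

lemma ex3 (hN : 0 < N) (z : B K N) (hz : vv K N * z = 0) : ∃ w, z = uu K N * w := by
  obtain ⟨w, hw⟩ := congr_u K N z
  have h0 : vv K N * ((mu K N z) ⊗ₜ[K] 1) = 0 := by
    have e : (mu K N z) ⊗ₜ[K] 1 = z - uu K N * w := by
      nth_rewrite 2 [hw]; ring
    rw [e]
    linear_combination hz - w * uv K N
  exact ex1 K N z (v_inj K N hN _ h0)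

lemma finA : Module.Finite K (A K N) := (AdjoinRoot.powerBasis' (monic_X_pow N)).finite

lemma ex2 (hN : 0 < N) (z : B K N) (hz : uu K N * z = 0) : ∃ w, z = vv K N * w := by
  have := finA K N
  let U : B K N →ₗ[K] B K N := LinearMap.mulLeft K (uu K N)
  let V : B K N →ₗ[K] B K N := LinearMap.mulLeft K (vv K N)
  have h1 : LinearMap.range U = LinearMap.ker V := by
    ext y
    constructor
    · rintro ⟨w, rfl⟩
      change vv K N * (uu K N * w) = 0
      linear_combination w * uv K N
    · intro hy
      obtain ⟨w, hw⟩ := ex3 K N hN y hy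
      exact ⟨w, hw.symm⟩
  have h2 : LinearMap.range V ≤ LinearMap.ker U := by
    rintro _ ⟨w, rfl⟩
    change uu K N * (vv K N * w) = 0
    linear_combination w * uv K N
  have r1 := LinearMap.finrank_range_add_finrank_ker U
  have r2 := LinearMap.finrank_range_add_finrank_ker V
  rw [← h1] at r2
  have h3 := Submodule.eq_of_le_of_finrank_eq h2 (by omega)
  have hz' : z ∈ LinearMap.ker U := hz
  rw [← h3] at hz'
  obtain ⟨w, hw⟩ := hz'
  exact ⟨w, hw.symm⟩

def ff : ModuleCat.of (B K N) (B K N) ⟶ M K N :=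
  ModuleCat.ofHom (Y := A K N) (Algebra.linearMap (B K N) (A K N))

lemma smulM (r : B K N) (x : M K N) : r • x = (mu K N r * (show A K N from x) : A K N) := rfl

open scoped ModuleCat in
def evalOne : ModuleCat.of K (ModuleCat.of (B K N) (B K N) ⟶ M K N) ≃ₗ[K] A K N where
  toFun g := g.hom 1
  map_add' _ _ := rfl
  map_smul' c g := by
    change (algebraMap K (B K N) c) • g.hom 1 = c • (show A K N from g.hom 1)
    rw [smulM, AlgHom.commutes, Algebra.smul_def]
  invFun x := ModuleCat.ofHom (LinearMap.toSpanSingleton (B K N) (M K N) x)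
  left_inv g := by
    ext
    exact one_smul (B K N) (g.hom 1)
  right_inv x := by
    exact one_smul (B K N) (show M K N from x)

end Conc

/-- for a field `K` of prime characteristic `p` and `A = K[x]/(x^{kp})`
with `k ≥ 1`, every `Ext^m_B(A,A)` is a `K`-vector space of dimension `kp`; in
particular `Ext^m_B(A,A) ≅ A` as `K`-vector spaces for all `m`. -/
theorem stmt11 (K : Type) [Field K] (p : ℕ) (hp : p.Prime) [CharP K p]
    (k : ℕ) (hk : 1 ≤ k) (m : ℕ) :
    Module.finrank K (ExtAA K (k * p) m) = k * p ∧
    Nonempty ((ExtAA K (k * p) m) ≃ₗ[K] A K (k * p)) := by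
  have hN : 0 < k * p := Nat.mul_pos hk hp.pos
  have hN0 : ((k * p : ℕ) : K) = 0 := by simp
  obtain ⟨e⟩ := perExt (K := K) (uu K (k * p)) (vv K (k * p)) (M K (k * p)) (ff K (k * p))
    (uv K _)
    (by
      ext
      change mu K (k * p) (uu K (k * p) * 1) = (0 : A K (k * p))
      rw [mul_one, mu_uu])
    (fun x => ⟨(show A K (k * p) from x) ⊗ₜ[K] 1, by
      change mu K (k * p) (_ ⊗ₜ[K] 1) = _
      rw [Algebra.TensorProduct.lmul'_apply_tmul, mul_one]⟩)
    (ex1 K _) (ex2 K _ hN) (ex3 K _ hN)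
    (fun x => by rw [smulM, mu_uu, zero_mul]; rfl)
    (fun x => by rw [smulM, mu_vv K _ hN0, zero_mul]; rfl) m
  have E : (ExtAA K (k * p) m) ≃ₗ[K] A K (k * p) := e.toLinearEquiv ≪≫ₗ evalOne K (k * p)
  refine ⟨?_, ⟨E⟩⟩
  rw [E.finrank_eq, (AdjoinRoot.powerBasis' (monic_X_pow (R := K) (k * p))).finrank]
  simp

end
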